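/- Fix real numbers a < b, T > 0 and integers M, N ≥ 1; set h = (b−a)/M, τ = T/N, grid points x_i = a + i·h for i = 0,…,M, and time levels t_k = k·τ for k = 0,…,N. Let φ : ℝ × ℝ × ℝⁿ × ℝ × ℝ → ℝⁿ satisfy ‖φ(t,x,y,τ,h) − φ(t,x,z,τ,h)‖_∞ ≤ L‖y − z‖_∞ for some L > 0 and all arguments. Let d_{k,i} ∈ [a,b] be given departure points for k = 0,…,N−1 and i = 0,…,M, and let (u^k_i) and (v^k_i) be two families of nodal values generated by the one-step semi-Lagrangian method u^{k+1}_i = P[u^k](d_{k,i}) + τ·φ(t_k, d_{k,i}, P[u^k](d_{k,i}), τ, h) and v^{k+1}_i = P[v^k](d_{k,i}) + τ·φ(t_k, d_{k,i}, P[v^k](d_{k,i}), τ, h), using the same departure points but possibly different initial nodal values u^0, v^0. Then for every k = 0,…,N, max_{0 ≤ i ≤ M} ‖u^k_i − v^k_i‖_∞ ≤ e^{T·L} · max_{0 ≤ i ≤ M} ‖u^0_i − v^0_i‖_∞. -/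

import Mathlib

/-- The piecewise linear interpolant of the nodal values `w 0, …, w M` on the
uniform grid `x i = a + i*h`: on `[x i, x (i+1)]` it equals
`w i + ((x - x i)/h) • (w (i+1) - w i)`. -/
noncomputable def plin (n : ℕ) (a h : ℝ) (M : ℕ) (w : ℕ → Fin n → ℝ) (x : ℝ) :
    Fin n → ℝ :=
  let i := min (M - 1) (Nat.floor ((x - a) / h))
  w i + ((x - (a + (i : ℝ) * h)) / h) • (w (i + 1) - w i)

/-!
A piecewise linear interpolant evaluates at a point of `[a, b]` to a convex combination of two
neighbouring nodal values, so interpolation does not increase the maximal nodal difference.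
An explicit step `y ↦ y + τ • f y` with `L`-Lipschitz `f` magnifies differences by at most
`1 + τ * L`. Over `N` steps of length `τ = T / N` the total magnification is at most
`(1 + T * L / N) ^ N ≤ exp (T * L)`.
-/

section OneStepMethod

variable {ι E : Type*} [SeminormedAddCommGroup E]

/-- An operator `P`, producing a value from nodal values, is nonexpansive on the set `S` of nodes
if `‖P w - P w'‖` is at most the maximal nodal difference of `w` and `w'` over `S`. The maximum is
encoded through its upper bounds, so that `S` need not be finite. -/
def NonexpansiveOn (S : Set ι) (P : (ι → E) → E) : Prop :=
  ∀ ⦃w w' : ι → E⦄ ⦃C : ℝ⦄, (∀ j ∈ S, ‖w j - w' j‖ ≤ C) → ‖P w - P w'‖ ≤ C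

variable [NormedSpace ℝ E]

theorem norm_add_smul_sub_add_smul_le {f : E → E} {τ L : ℝ} (hτ : 0 ≤ τ) {y z : E}
    (hf : ‖f y - f z‖ ≤ L * ‖y - z‖) :
    ‖(y + τ • f y) - (z + τ • f z)‖ ≤ (1 + τ * L) * ‖y - z‖ :=
  calc ‖(y + τ • f y) - (z + τ • f z)‖
    _ = ‖(y - z) + τ • (f y - f z)‖ := by rw [add_sub_add_comm, smul_sub]
    _ ≤ ‖y - z‖ + ‖τ • (f y - f z)‖ := norm_add_le _ _
    _ = ‖y - z‖ + τ * ‖f y - f z‖ := by rw [norm_smul_of_nonneg hτ]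
    _ ≤ ‖y - z‖ + τ * (L * ‖y - z‖) := by gcongr
    _ = (1 + τ * L) * ‖y - z‖ := by ring

/-- The nodal values `u k i`, for time levels `k ≤ N` and nodes `i ∈ S`, are generated by the
one-step semi-Lagrangian method with step size `τ`. The operator `P k i` is interpolation at the
departure point of node `i` at level `k`, and `f k i` is the increment function there. -/
def IsSemiLagrangianSolution (S : Set ι) (N : ℕ) (τ : ℝ) (P : ℕ → ι → (ι → E) → E)
    (f : ℕ → ι → E → E) (u : ℕ → ι → E) : Prop :=
  ∀ k < N, ∀ i ∈ S, u (k + 1) i = P k i (u k) + τ • f k i (P k i (u k))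

namespace IsSemiLagrangianSolution

variable {S : Set ι} {N : ℕ} {τ L D : ℝ} {P : ℕ → ι → (ι → E) → E} {f : ℕ → ι → E → E}
  {u v : ℕ → ι → E}

theorem norm_sub_le_pow_mul (hu : IsSemiLagrangianSolution S N τ P f u)
    (hv : IsSemiLagrangianSolution S N τ P f v) (hτ : 0 ≤ τ) (hL : 0 ≤ L)
    (hP : ∀ k < N, ∀ i ∈ S, NonexpansiveOn S (P k i))
    (hf : ∀ k < N, ∀ i ∈ S, ∀ y z, ‖f k i y - f k i z‖ ≤ L * ‖y - z‖)
    (hD : ∀ i ∈ S, ‖u 0 i - v 0 i‖ ≤ D) {k : ℕ} (hk : k ≤ N) :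
    ∀ i ∈ S, ‖u k i - v k i‖ ≤ (1 + τ * L) ^ k * D := by
  induction k with
  | zero => simpa using hD
  | succ k ih =>
    intro i hi
    rw [hu k hk i hi, hv k hk i hi]
    calc _ ≤ (1 + τ * L) * ‖P k i (u k) - P k i (v k)‖ :=
          norm_add_smul_sub_add_smul_le hτ (hf k hk i hi _ _)
      _ ≤ (1 + τ * L) * ((1 + τ * L) ^ k * D) := by
          gcongr
          exact hP k hk i hi (ih (Nat.le_of_succ_le hk))
      _ = (1 + τ * L) ^ (k + 1) * D := by ring

theorem norm_sub_le_exp_mul {T : ℝ} (hu : IsSemiLagrangianSolution S N (T / N) P f u)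
    (hv : IsSemiLagrangianSolution S N (T / N) P f v) (hT : 0 ≤ T) (hL : 0 ≤ L)
    (hP : ∀ k < N, ∀ i ∈ S, NonexpansiveOn S (P k i))
    (hf : ∀ k < N, ∀ i ∈ S, ∀ y z, ‖f k i y - f k i z‖ ≤ L * ‖y - z‖)
    (hD : ∀ i ∈ S, ‖u 0 i - v 0 i‖ ≤ D) {k : ℕ} (hk : k ≤ N) {i : ι} (hi : i ∈ S) :
    ‖u k i - v k i‖ ≤ Real.exp (T * L) * D := by
  have hD0 : 0 ≤ D := (norm_nonneg _).trans (hD i hi)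
  have hTL : 0 ≤ T * L := mul_nonneg hT hL
  have hτ : 0 ≤ T / N := by positivity
  have hgrowth : (1 + T / N * L) ^ k ≤ Real.exp (T * L) :=
    calc (1 + T / N * L) ^ k
      _ ≤ (1 + T / N * L) ^ N :=
          pow_le_pow_right₀ (le_add_of_nonneg_right (mul_nonneg hτ hL)) hk
      _ = (1 - -(T * L) / N) ^ N := by ring
      _ ≤ Real.exp (T * L) := by
          simpa only [neg_neg] using Real.one_sub_div_pow_le_exp_neg
            ((neg_nonpos.2 hTL).trans (Nat.cast_nonneg N))
  calc ‖u k i - v k i‖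
    _ ≤ (1 + T / N * L) ^ k * D := norm_sub_le_pow_mul hu hv hτ hL hP hf hD hk i hi
    _ ≤ Real.exp (T * L) * D := by gcongr

end IsSemiLagrangianSolution

end OneStepMethod

section PiecewiseLinear

/-- The index of a cell `[i, i + 1]` of the integer grid on `[0, M]` containing `y ∈ [0, M]`.
The minimum assigns the right end point `y = M` to the last cell. -/
noncomputable def gridCell (M : ℕ) (y : ℝ) : ℕ :=
  min (M - 1) ⌊y⌋₊

theorem gridCell_lt {M : ℕ} (hM : 1 ≤ M) (y : ℝ) : gridCell M y < M :=
  (min_le_left _ _).trans_lt (Nat.sub_one_lt_of_lt hM)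

theorem sub_gridCell_mem_Icc {M : ℕ} (hM : 1 ≤ M) {y : ℝ} (hy : y ∈ Set.Icc 0 (M : ℝ)) :
    y - gridCell M y ∈ Set.Icc (0 : ℝ) 1 := by
  have hlower : (gridCell M y : ℝ) ≤ y :=
    (Nat.cast_le.2 (min_le_right _ _)).trans (Nat.floor_le hy.1)
  have hupper : y ≤ gridCell M y + 1 := by
    rcases min_choice (M - 1) ⌊y⌋₊ with hlast | hfloor
    · rw [gridCell, hlast, Nat.cast_pred hM, sub_add_cancel]
      exact hy.2
    · rw [gridCell, hfloor]
      exact (Nat.lt_floor_add_one y).le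
  exact ⟨sub_nonneg.2 hlower, sub_le_iff_le_add'.2 hupper⟩

variable {E : Type*} [SeminormedAddCommGroup E] [NormedSpace ℝ E]

/-- The interpolant `P[w]` of nodal values `w 0, …, w M` in a real normed space on the grid
`a + i * h`. For `E = Fin n → ℝ` it is definitionally `plin`. -/
noncomputable def piecewiseLinear (a h : ℝ) (M : ℕ) (w : ℕ → E) (x : ℝ) : E :=
  let i := gridCell M ((x - a) / h)
  w i + ((x - (a + i * h)) / h) • (w (i + 1) - w i)

theorem piecewiseLinear_eq_lineMap {a h : ℝ} (hh : h ≠ 0) (M : ℕ) (w : ℕ → E) (x : ℝ) :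
    piecewiseLinear a h M w x =
      AffineMap.lineMap (w (gridCell M ((x - a) / h))) (w (gridCell M ((x - a) / h) + 1))
        ((x - a) / h - gridCell M ((x - a) / h)) := by
  rw [piecewiseLinear, AffineMap.lineMap_apply_module', add_comm, ← sub_sub, sub_div _ _ h,
    mul_div_cancel_right₀ _ hh]

theorem norm_lineMap_sub_lineMap_le {p q p' q' : E} {s C : ℝ} (hs : s ∈ Set.Icc (0 : ℝ) 1)
    (hp : ‖p - p'‖ ≤ C) (hq : ‖q - q'‖ ≤ C) :
    ‖AffineMap.lineMap p q s - AffineMap.lineMap p' q' s‖ ≤ C := by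
  rw [← vsub_eq_sub, AffineMap.lineMap_vsub_lineMap, ← mem_closedBall_zero_iff]
  exact (convex_closedBall 0 C).lineMap_mem (mem_closedBall_zero_iff.2 hp)
    (mem_closedBall_zero_iff.2 hq) hs

theorem nonexpansiveOn_piecewiseLinear {M : ℕ} (hM : 1 ≤ M) {a b x : ℝ} (hab : a < b)
    (hx : x ∈ Set.Icc a b) :
    NonexpansiveOn (Set.Iic M) fun w : ℕ → E => piecewiseLinear a ((b - a) / M) M w x := by
  intro w w' C hC
  have hM0 : (0 : ℝ) < M := Nat.cast_pos.2 hM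
  have hh : 0 < (b - a) / M := div_pos (sub_pos.2 hab) hM0
  have hy : (x - a) / ((b - a) / M) ∈ Set.Icc 0 (M : ℝ) := by
    refine ⟨div_nonneg (sub_nonneg.2 hx.1) hh.le, (div_le_iff₀ hh).2 ?_⟩
    rw [mul_div_cancel₀ _ hM0.ne']
    exact sub_le_sub_right hx.2 a
  have hcell := gridCell_lt hM ((x - a) / ((b - a) / M))
  simp only [piecewiseLinear_eq_lineMap hh.ne']
  exact norm_lineMap_sub_lineMap_le (sub_gridCell_mem_Icc hM hy) (hC _ hcell.le) (hC _ hcell)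

end PiecewiseLinear

theorem stmt_5_general {E : Type*} [SeminormedAddCommGroup E] [NormedSpace ℝ E]
    {M N : ℕ} (hM : 1 ≤ M) {a b T L : ℝ} (hab : a < b) (hT : 0 ≤ T) (hL : 0 ≤ L)
    {f : ℕ → ℕ → E → E}
    (hf : ∀ k < N, ∀ i ≤ M, ∀ y z, ‖f k i y - f k i z‖ ≤ L * ‖y - z‖)
    {d : ℕ → ℕ → ℝ} (hd : ∀ k < N, ∀ i ≤ M, d k i ∈ Set.Icc a b) {u v : ℕ → ℕ → E}
    (hu : IsSemiLagrangianSolution (Set.Iic M) N (T / N)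
      (fun k i w => piecewiseLinear a ((b - a) / M) M w (d k i)) f u)
    (hv : IsSemiLagrangianSolution (Set.Iic M) N (T / N)
      (fun k i w => piecewiseLinear a ((b - a) / M) M w (d k i)) f v) :
    ∀ k ≤ N, ∀ i ≤ M,
      ‖u k i - v k i‖ ≤ Real.exp (T * L) *
        (Finset.range (M + 1)).sup' Finset.nonempty_range_add_one
          (fun j => ‖u 0 j - v 0 j‖) := by
  intro k hk i hi
  refine hu.norm_sub_le_exp_mul hv hT hL
    (fun k hk i hi => nonexpansiveOn_piecewiseLinear hM hab (hd k hk i hi)) hf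
    (fun j hj => ?_) hk hi
  exact Finset.le_sup' (fun j => ‖u 0 j - v 0 j‖) (Finset.mem_range_succ_iff.2 hj)

/-- Stability (part 1 of Theorem 3.5): two numerical solutions of the one-step
semi-Lagrangian method with the same departure points satisfy
`max_i ‖u^k_i - v^k_i‖_∞ ≤ e^{TL} · max_i ‖u^0_i - v^0_i‖_∞` for `k = 0, …, N`. -/
theorem stmt_5 (n M N : ℕ) (hM : 1 ≤ M) (hN : 1 ≤ N)
    (a b T L : ℝ) (hab : a < b) (hT : 0 < T) (hL : 0 < L)
    (φ : ℝ → ℝ → (Fin n → ℝ) → ℝ → ℝ → (Fin n → ℝ))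
    (hφ : ∀ (t x : ℝ) (w w' : Fin n → ℝ) (τ' h' : ℝ),
      ‖φ t x w τ' h' - φ t x w' τ' h'‖ ≤ L * ‖w - w'‖)
    (d : ℕ → ℕ → ℝ) (hd : ∀ k, k < N → ∀ i, i ≤ M → d k i ∈ Set.Icc a b)
    (u v : ℕ → ℕ → Fin n → ℝ)
    (hu : ∀ k, k < N → ∀ i, i ≤ M → u (k + 1) i =
      plin n a ((b - a) / M) M (u k) (d k i)
        + (T / N) • φ ((k : ℝ) * (T / N)) (d k i)
            (plin n a ((b - a) / M) M (u k) (d k i)) (T / N) ((b - a) / M))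
    (hv : ∀ k, k < N → ∀ i, i ≤ M → v (k + 1) i =
      plin n a ((b - a) / M) M (v k) (d k i)
        + (T / N) • φ ((k : ℝ) * (T / N)) (d k i)
            (plin n a ((b - a) / M) M (v k) (d k i)) (T / N) ((b - a) / M)) :
    ∀ k, k ≤ N → ∀ i, i ≤ M →
      ‖u k i - v k i‖ ≤ Real.exp (T * L) *
        (Finset.range (M + 1)).sup' Finset.nonempty_range_add_one
          (fun j => ‖u 0 j - v 0 j‖) := by
  exact stmt_5_general hM hab hT.le hL.le
    (f := fun k i y => φ (k * (T / N)) (d k i) y (T / N) ((b - a) / M))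
    (fun _ _ _ _ _ _ => hφ _ _ _ _ _ _) hd hu hv
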